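/- Let G be a countable group and let u be a free infinitary Schur ultrafilter on G. Then u is not a P-point. -/

import Mathlib

/-- An ultrafilter is *free* if it contains no finite set. -/
def IsFreeUltrafilter {X : Type*} (u : Ultrafilter X) : Prop :=
  ∀ A ∈ u, ¬ A.Finite

/-- An ultrafilter `u` on a multiplicative semigroup is *infinitary Schur* if for each
`U ∈ u` there exist `a ∈ U` and an infinite subset `B ⊆ U` with `a • B ⊆ U`. -/
def IsInfSchurUltrafilter {S : Type*} [Mul S] (u : Ultrafilter S) : Prop :=
  ∀ U ∈ u, ∃ a ∈ U, ∃ B ⊆ U, B.Infinite ∧ ∀ b ∈ B, a * b ∈ U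

/-- An ultrafilter `u` on a countable set is a *P-point* if for every countable
family `{U n : n ∈ ℕ} ⊆ u` there exists `U ∈ u` with `U \ U n` finite for all `n`. -/
def IsPPoint {X : Type*} (u : Ultrafilter X) : Prop :=
  ∀ f : ℕ → Set X, (∀ n, f n ∈ u) → ∃ U ∈ u, ∀ n, (U \ f n).Finite

/-!
Left translation `f` by a non-identity element `a` of a cancellative semigroup is injective and has
no fixed points. If `V` is maximal among the sets disjoint from their preimage under `f`, then `V`,
`f ⁻¹' V` and `f '' V` cover the semigroup and each of them is disjoint from its own preimage, so
one of these three sets belongs to `u`. Only countably many `a` matter, so a P-point would contain a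
single `U` that is almost included in all of the sets so obtained. Then `U ∩ f ⁻¹' U` is finite for
each of these `a`, which leaves no room for an infinite `B ⊆ U` with `a * B ⊆ U`.
-/

open Set

section DisjointPreimage

variable {X : Type*} {f : X → X} {U V : Set X}

lemma exists_maximal_disjoint_preimage (f : X → X) :
    ∃ V : Set X, Maximal (fun W ↦ Disjoint W (f ⁻¹' W)) V := by
  refine zorn_subset {W | Disjoint W (f ⁻¹' W)} fun c hc hchain ↦
    ⟨⋃₀ c, disjoint_left.2 ?_, fun _ ↦ subset_sUnion_of_mem⟩
  rintro x ⟨W₁, hW₁, hx⟩ ⟨W₂, hW₂, hfx⟩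
  obtain ⟨W, hW, hW₁W, hW₂W⟩ := hchain.directedOn W₁ hW₁ W₂ hW₂
  exact disjoint_left.1 (hc hW) (hW₁W hx) (hW₂W hfx)

lemma union_preimage_union_image_eq_univ_of_maximal (hfix : ∀ x, f x ≠ x)
    (hV : Maximal (fun W ↦ Disjoint W (f ⁻¹' W)) V) : V ∪ f ⁻¹' V ∪ f '' V = univ := by
  refine eq_univ_of_forall fun x ↦ ?_
  by_contra hx
  simp only [mem_union, not_or] at hx
  obtain ⟨⟨hxV, hfxV⟩, hxfV⟩ := hx
  have hinsert : Disjoint (insert x V) (f ⁻¹' insert x V) := by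
    refine disjoint_left.2 ?_
    rintro y (rfl | hy) (hfy | hfy)
    · exact hfix y hfy
    · exact hfxV hfy
    · exact hxfV ⟨y, hy, hfy⟩
    · exact disjoint_left.1 hV.prop hy hfy
  exact hxV (hV.mem_of_prop_insert hinsert)

lemma disjoint_image_preimage_image (hf : f.Injective) (hV : Disjoint V (f ⁻¹' V)) :
    Disjoint (f '' V) (f ⁻¹' (f '' V)) := by
  rw [preimage_image_eq V hf, disjoint_comm, disjoint_image_right]
  exact hV.symm

lemma exists_mem_ultrafilter_disjoint_preimage (u : Ultrafilter X) (hf : f.Injective)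
    (hfix : ∀ x, f x ≠ x) : ∃ V ∈ u, Disjoint V (f ⁻¹' V) := by
  obtain ⟨V, hV⟩ := exists_maximal_disjoint_preimage f
  have hcover : V ∪ f ⁻¹' V ∪ f '' V ∈ u := by
    rw [union_preimage_union_image_eq_univ_of_maximal hfix hV]
    exact Filter.univ_mem
  rcases Ultrafilter.union_mem_iff.1 hcover with hcover | himage
  · rcases Ultrafilter.union_mem_iff.1 hcover with hmem | hpreimage
    · exact ⟨V, hmem, hV.prop⟩
    · exact ⟨f ⁻¹' V, hpreimage, hV.prop.preimage f⟩
  · exact ⟨f '' V, himage, disjoint_image_preimage_image hf hV.prop⟩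

lemma finite_inter_preimage_of_finite_sdiff (hf : f.Injective) (hV : Disjoint V (f ⁻¹' V))
    (hUV : (U \ V).Finite) : (U ∩ f ⁻¹' U).Finite := by
  refine (hUV.union (hUV.preimage hf.injOn)).subset fun x ⟨hx, hfx⟩ ↦ ?_
  by_cases hxV : x ∈ V
  · exact Or.inr ⟨hfx, disjoint_left.1 hV hxV⟩
  · exact Or.inl ⟨hx, hxV⟩

end DisjointPreimage

lemma subsingleton_setOf_exists_mul_eq_right (S : Type*) [Semigroup S] [IsCancelMul S] :
    {a : S | ∃ x, a * x = x}.Subsingleton := by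
  have mul_eq_left {a x : S} (hax : a * x = x) (b : S) : b * a = b :=
    mul_right_cancel (b := x) (by rw [mul_assoc, hax])
  rintro a ⟨x, hax⟩ b ⟨y, hby⟩
  calc
    a = a * b := (mul_eq_left hby a).symm
    _ = b := mul_left_cancel (a := a) (by rw [← mul_assoc, mul_eq_left hax])

lemma IsInfSchurUltrafilter.isFreeUltrafilter {S : Type*} [Mul S] {u : Ultrafilter S}
    (hu : IsInfSchurUltrafilter u) : IsFreeUltrafilter u := by
  intro U hU hfin
  obtain ⟨_, _, B, hBU, hB, _⟩ := hu U hU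
  exact hB (hfin.subset hBU)

lemma IsFreeUltrafilter.compl_mem {X : Type*} {u : Ultrafilter X} (hu : IsFreeUltrafilter u)
    {A : Set X} (hA : A.Finite) : Aᶜ ∈ u :=
  Ultrafilter.compl_mem_iff_notMem.2 fun hmem ↦ hu A hmem hA

lemma IsPPoint.exists_mem_forall_sdiff_finite {X ι : Type*} [Countable ι] {u : Ultrafilter X}
    (hu : IsPPoint u) {V : ι → Set X} (hV : ∀ i, V i ∈ u) :
    ∃ U ∈ u, ∀ i, (U \ V i).Finite := by
  rcases isEmpty_or_nonempty ι with _ | _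
  · exact ⟨univ, Filter.univ_mem, isEmptyElim⟩
  · obtain ⟨s, hs⟩ := exists_surjective_nat ι
    obtain ⟨U, hU, hfin⟩ := hu (V ∘ s) fun n ↦ hV (s n)
    exact ⟨U, hU, hs.forall.2 hfin⟩

theorem infSchur_not_ppoint_general {S : Type*} [Semigroup S] [IsCancelMul S]
    {u : Ultrafilter S} {C : Set S} (hC : C.Countable) (hCu : C ∈ u)
    (hinf : IsInfSchurUltrafilter u) : ¬ IsPPoint u := by
  intro hP
  let W : Set S := C \ {a | ∃ x, a * x = x}
  have hWu : W ∈ u := Filter.inter_mem hCu <|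
    hinf.isFreeUltrafilter.compl_mem (subsingleton_setOf_exists_mul_eq_right S).finite
  have : Countable W := (hC.mono sdiff_subset).to_subtype
  have hdisjoint (a : W) : ∃ V ∈ u, Disjoint V ((a.1 * ·) ⁻¹' V) :=
    exists_mem_ultrafilter_disjoint_preimage u (mul_right_injective a.1) (not_exists.1 a.2.2)
  choose V hVu hV using hdisjoint
  obtain ⟨U, hU, hUV⟩ := hP.exists_mem_forall_sdiff_finite hVu
  obtain ⟨a, ⟨-, haW⟩, B, hBU, hB, haB⟩ := hinf (U ∩ W) (Filter.inter_mem hU hWu)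
  have hfin : (U ∩ (a * ·) ⁻¹' U).Finite :=
    finite_inter_preimage_of_finite_sdiff (mul_right_injective a) (hV ⟨a, haW⟩) (hUV ⟨a, haW⟩)
  exact hB (hfin.subset fun b hb ↦ ⟨(hBU hb).1, (haB b hb).1⟩)

/-- A free infinitary Schur ultrafilter on a countable group is not a P-point. -/
theorem infSchur_not_ppoint {G : Type*} [Group G] [Countable G]
    (u : Ultrafilter G) (hfree : IsFreeUltrafilter u) (hinf : IsInfSchurUltrafilter u) :
    ¬ IsPPoint u := by
  exact infSchur_not_ppoint_general countable_univ Filter.univ_mem hinf
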